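/- arXiv:0805.2494 — 11 statements merged into one kernel-verified Lean document; each statement's English description precedes it below -/
import Mathlib

section
/- In the rectangle group R, set x = a b⁻¹ and y = a c⁻¹. Then x y = y x = a d⁻¹; in particular x and y commute. -/
/-- The defining relations of the rectangle group `R(n_a, n_b, n_c, n_d)`:
generators `a, b, c, d` (indexed `0, 1, 2, 3`), relations
`a^{n_a} = b^{n_b} = c^{n_c} = d^{n_d} = 1`, `b a⁻¹ = d c⁻¹`, `c a⁻¹ = d b⁻¹`. -/
def rectRels (na nb nc nd : ℕ) : Set (FreeGroup (Fin 4)) :=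
  {FreeGroup.of 0 ^ na, FreeGroup.of 1 ^ nb, FreeGroup.of 2 ^ nc, FreeGroup.of 3 ^ nd,
    FreeGroup.of 1 * (FreeGroup.of 0)⁻¹ * (FreeGroup.of 3 * (FreeGroup.of 2)⁻¹)⁻¹,
    FreeGroup.of 2 * (FreeGroup.of 0)⁻¹ * (FreeGroup.of 3 * (FreeGroup.of 1)⁻¹)⁻¹}

/-- The rectangle group. -/
abbrev RectGroup (na nb nc nd : ℕ) : Type := PresentedGroup (rectRels na nb nc nd)

/-- The generator `a` of the rectangle group. -/
def Ra (na nb nc nd : ℕ) : RectGroup na nb nc nd := PresentedGroup.of 0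
/-- The generator `b` of the rectangle group. -/
def Rb (na nb nc nd : ℕ) : RectGroup na nb nc nd := PresentedGroup.of 1
/-- The generator `c` of the rectangle group. -/
def Rc (na nb nc nd : ℕ) : RectGroup na nb nc nd := PresentedGroup.of 2
/-- The generator `d` of the rectangle group. -/
def Rd (na nb nc nd : ℕ) : RectGroup na nb nc nd := PresentedGroup.of 3

/-- In the rectangle group `R`, with `x = a b⁻¹` and `y = a c⁻¹`, we have
`x y = y x = a d⁻¹`; in particular `x` and `y` commute. -/
theorem rect_xy_eq_yx_eq_ad (na nb nc nd : ℕ)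
    (hna : 2 ≤ na) (hnb : 2 ≤ nb) (hnc : 2 ≤ nc) (hnd : 2 ≤ nd) :
    (Ra na nb nc nd * (Rb na nb nc nd)⁻¹) * (Ra na nb nc nd * (Rc na nb nc nd)⁻¹)
        = Ra na nb nc nd * (Rd na nb nc nd)⁻¹ ∧
    (Ra na nb nc nd * (Rc na nb nc nd)⁻¹) * (Ra na nb nc nd * (Rb na nb nc nd)⁻¹)
        = Ra na nb nc nd * (Rd na nb nc nd)⁻¹ ∧
    Commute (Ra na nb nc nd * (Rb na nb nc nd)⁻¹) (Ra na nb nc nd * (Rc na nb nc nd)⁻¹) := by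
  have h1 : Rb na nb nc nd * (Ra na nb nc nd)⁻¹ * (Rd na nb nc nd * (Rc na nb nc nd)⁻¹)⁻¹ = 1 :=
    PresentedGroup.one_of_mem (rels := rectRels na nb nc nd)
      (x := FreeGroup.of 1 * (FreeGroup.of 0)⁻¹ * (FreeGroup.of 3 * (FreeGroup.of 2)⁻¹)⁻¹)
      (by simp [rectRels])
  have h2 : Rc na nb nc nd * (Ra na nb nc nd)⁻¹ * (Rd na nb nc nd * (Rb na nb nc nd)⁻¹)⁻¹ = 1 :=
    PresentedGroup.one_of_mem (rels := rectRels na nb nc nd)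
      (x := FreeGroup.of 2 * (FreeGroup.of 0)⁻¹ * (FreeGroup.of 3 * (FreeGroup.of 1)⁻¹)⁻¹)
      (by simp [rectRels])
  generalize Ra na nb nc nd = a at *
  generalize Rb na nb nc nd = b at *
  generalize Rc na nb nc nd = c at *
  generalize Rd na nb nc nd = d at *
  have e1 : d = b * a⁻¹ * c := by
    rw [mul_inv_eq_one.mp h1]; group
  have e2 : d = c * a⁻¹ * b := by
    rw [mul_inv_eq_one.mp h2]; group
  have k1 : (a * b⁻¹) * (a * c⁻¹) = a * d⁻¹ := by rw [e2]; group
  have k2 : (a * c⁻¹) * (a * b⁻¹) = a * d⁻¹ := by rw [e1]; group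
  exact ⟨k1, k2, k1.trans k2.symm⟩
end

section
/- In the rectangle group R, the elements b⁻¹ a and c⁻¹ a commute. -/
/-- In the rectangle group `R`, the elements `b⁻¹ a` and `c⁻¹ a` commute. -/
theorem rect_commute_binv_a_cinv_a (na nb nc nd : ℕ)
    (hna : 2 ≤ na) (hnb : 2 ≤ nb) (hnc : 2 ≤ nc) (hnd : 2 ≤ nd) :
    Commute ((Rb na nb nc nd)⁻¹ * Ra na nb nc nd) ((Rc na nb nc nd)⁻¹ * Ra na nb nc nd) := by
  have h1 : Rb na nb nc nd * (Ra na nb nc nd)⁻¹ * (Rd na nb nc nd * (Rc na nb nc nd)⁻¹)⁻¹ = 1 :=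
    PresentedGroup.one_of_mem (rels := rectRels na nb nc nd)
      (x := FreeGroup.of 1 * (FreeGroup.of 0)⁻¹ * (FreeGroup.of 3 * (FreeGroup.of 2)⁻¹)⁻¹)
      (by simp [rectRels])
  have h2 : Rc na nb nc nd * (Ra na nb nc nd)⁻¹ * (Rd na nb nc nd * (Rb na nb nc nd)⁻¹)⁻¹ = 1 :=
    PresentedGroup.one_of_mem (rels := rectRels na nb nc nd)
      (x := FreeGroup.of 2 * (FreeGroup.of 0)⁻¹ * (FreeGroup.of 3 * (FreeGroup.of 1)⁻¹)⁻¹)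
      (by simp [rectRels])
  generalize Ra na nb nc nd = a at *
  generalize Rb na nb nc nd = b at *
  generalize Rc na nb nc nd = c at *
  generalize Rd na nb nc nd = d at *
  have e1 : d = b * a⁻¹ * c := by
    rw [mul_inv_eq_one.mp h1]; group
  have e2 : d = c * a⁻¹ * b := by
    rw [mul_inv_eq_one.mp h2]; group
  have e3 : (b * a⁻¹ * c)⁻¹ = (c * a⁻¹ * b)⁻¹ := by rw [← e1, ← e2]
  have e4 : c⁻¹ * a * b⁻¹ = b⁻¹ * a * c⁻¹ := by
    simpa [mul_assoc] using e3
  show b⁻¹ * a * (c⁻¹ * a) = c⁻¹ * a * (b⁻¹ * a)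
  rw [← mul_assoc, ← mul_assoc, e4]
end

section
/- The rectangle group R is isomorphic to the amalgamated free product (pushout) G₁ *_C G₂, where G₁ is the presented group ⟨a, b | a^{n_a} = b^{n_b} = 1⟩, G₂ is the presented group ⟨c, d | c^{n_c} = d^{n_d} = 1⟩, C is the free group on two generators s, t, and the amalgamation homomorphisms are determined by s ↦ a b⁻¹, t ↦ b⁻¹ a into G₁ and s ↦ c d⁻¹, t ↦ d⁻¹ c into G₂; the isomorphism carries the images of a, b, c, d in the pushout to the generators a, b, c, d of R. -/
/-- The relations of the free product of cyclic groups of orders `m` and `n`,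
on two generators. -/
def twoCyclicRels (m n : ℕ) : Set (FreeGroup (Fin 2)) :=
  {FreeGroup.of 0 ^ m, FreeGroup.of 1 ^ n}

/-- A two-element family of groups, indexed by `Bool`. -/
def twoFam (G₁ G₂ : Type) : Bool → Type := fun i => match i with
  | true => G₁
  | false => G₂

instance twoFamGroup (G₁ G₂ : Type) [Group G₁] [Group G₂] :
    (i : Bool) → Group (twoFam G₁ G₂ i) := fun i => match i with
  | true => inferInstanceAs (Group G₁)
  | false => inferInstanceAs (Group G₂)

/-- A pair of homomorphisms out of `K`, packaged as a `Bool`-indexed family. -/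
def twoFamHom {K G₁ G₂ : Type} [Group K] [Group G₁] [Group G₂]
    (φ₁ : K →* G₁) (φ₂ : K →* G₂) : (i : Bool) → K →* twoFam G₁ G₂ i := fun i => match i with
  | true => φ₁
  | false => φ₂

/-- The amalgamation map `C → G₁ = ⟨a, b | a^{n_a} = b^{n_b} = 1⟩`,
`s ↦ a b⁻¹`, `t ↦ b⁻¹ a`, where `C` is free on `s, t`. -/
def amalgMap (m n : ℕ) : FreeGroup (Fin 2) →* PresentedGroup (twoCyclicRels m n) :=
  FreeGroup.lift
    ![PresentedGroup.of 0 * (PresentedGroup.of 1)⁻¹,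
      (PresentedGroup.of 1)⁻¹ * PresentedGroup.of 0]

theorem twoCyc_lift {K : Type} [Group K] (m n : ℕ) (x y : K) (hx : x ^ m = 1) (hy : y ^ n = 1) :
    ∃ f : PresentedGroup (twoCyclicRels m n) →* K,
      f (PresentedGroup.of 0) = x ∧ f (PresentedGroup.of 1) = y := by
  have h : ∀ r ∈ twoCyclicRels m n, FreeGroup.lift ![x, y] r = 1 := by
    intro r hr
    rcases hr with rfl | rfl
    · simpa using hx
    · simpa using hy
  exact ⟨PresentedGroup.toGroup h, by simp [PresentedGroup.toGroup.of],
    by simp [PresentedGroup.toGroup.of]⟩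

theorem twoCyc_pow (m n : ℕ) :
    (PresentedGroup.of 0 : PresentedGroup (twoCyclicRels m n)) ^ m = 1 ∧
    (PresentedGroup.of 1 : PresentedGroup (twoCyclicRels m n)) ^ n = 1 :=
  ⟨PresentedGroup.one_of_mem (rels := twoCyclicRels m n) (Or.inl rfl),
    PresentedGroup.one_of_mem (rels := twoCyclicRels m n) (Or.inr rfl)⟩

theorem rect_lift {K : Type} [Group K] (na nb nc nd : ℕ) (a b c d : K)
    (ha : a ^ na = 1) (hb : b ^ nb = 1) (hc : c ^ nc = 1) (hd : d ^ nd = 1)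
    (h1 : b * a⁻¹ = d * c⁻¹) (h2 : c * a⁻¹ = d * b⁻¹) :
    ∃ f : RectGroup na nb nc nd →* K,
      f (Ra na nb nc nd) = a ∧ f (Rb na nb nc nd) = b ∧
      f (Rc na nb nc nd) = c ∧ f (Rd na nb nc nd) = d := by
  have h : ∀ r ∈ rectRels na nb nc nd, FreeGroup.lift ![a, b, c, d] r = 1 := by
    intro r hr
    rcases hr with rfl | rfl | rfl | rfl | rfl | rfl
    · simpa using ha
    · simpa using hb
    · simpa using hc
    · simpa using hd
    · rw [← mul_inv_eq_one] at h1; simpa using h1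
    · rw [← mul_inv_eq_one] at h2; simpa using h2
  exact ⟨PresentedGroup.toGroup h, by simp [Ra, PresentedGroup.toGroup.of],
    by simp [Rb, PresentedGroup.toGroup.of], by simp [Rc, PresentedGroup.toGroup.of],
    by simp [Rd, PresentedGroup.toGroup.of]⟩

theorem rect_rel (na nb nc nd : ℕ) :
    Ra na nb nc nd ^ na = 1 ∧ Rb na nb nc nd ^ nb = 1 ∧ Rc na nb nc nd ^ nc = 1 ∧
    Rd na nb nc nd ^ nd = 1 ∧
    Rb na nb nc nd * (Ra na nb nc nd)⁻¹ * (Rd na nb nc nd * (Rc na nb nc nd)⁻¹)⁻¹ = 1 ∧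
    Rc na nb nc nd * (Ra na nb nc nd)⁻¹ * (Rd na nb nc nd * (Rb na nb nc nd)⁻¹)⁻¹ = 1 := by
  refine ⟨?_, ?_, ?_, ?_, ?_, ?_⟩
  · exact PresentedGroup.one_of_mem (rels := rectRels na nb nc nd) (x := FreeGroup.of 0 ^ na)
      (by simp [rectRels])
  · exact PresentedGroup.one_of_mem (rels := rectRels na nb nc nd) (x := FreeGroup.of 1 ^ nb)
      (by simp [rectRels])
  · exact PresentedGroup.one_of_mem (rels := rectRels na nb nc nd) (x := FreeGroup.of 2 ^ nc)
      (by simp [rectRels])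
  · exact PresentedGroup.one_of_mem (rels := rectRels na nb nc nd) (x := FreeGroup.of 3 ^ nd)
      (by simp [rectRels])
  · exact PresentedGroup.one_of_mem (rels := rectRels na nb nc nd)
      (Or.inr (Or.inr (Or.inr (Or.inr (Or.inl rfl)))))
  · exact PresentedGroup.one_of_mem (rels := rectRels na nb nc nd)
      (Or.inr (Or.inr (Or.inr (Or.inr (Or.inr rfl)))))

theorem hom_aux {H K : Type} [Group H] [Group K] (f : H →* K) (x y : H) :
    f (x * y⁻¹) = f x * (f y)⁻¹ ∧ f (y⁻¹ * x) = (f y)⁻¹ * f x := by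
  simp

theorem grp_aux1 {K : Type} [Group K] {a b c d : K} :
    b * a⁻¹ = d * c⁻¹ ↔ a * b⁻¹ = c * d⁻¹ := by
  rw [← inv_inj]; simp

theorem grp_aux2 {K : Type} [Group K] {a b c d : K} :
    c * a⁻¹ = d * b⁻¹ ↔ b⁻¹ * a = d⁻¹ * c := by
  rw [mul_inv_eq_iff_eq_mul, mul_assoc, ← inv_mul_eq_iff_eq_mul, eq_comm]

/-- The pushout in explicit form. -/
theorem push_data (na nb nc nd : ℕ) :
    ∃ (i₁ : PresentedGroup (twoCyclicRels na nb) →*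
          Monoid.PushoutI (twoFamHom (amalgMap na nb) (amalgMap nc nd)))
      (i₂ : PresentedGroup (twoCyclicRels nc nd) →*
          Monoid.PushoutI (twoFamHom (amalgMap na nb) (amalgMap nc nd))),
      (∀ x, i₁ x = Monoid.PushoutI.of
        (φ := twoFamHom (amalgMap na nb) (amalgMap nc nd)) true x) ∧
      (∀ x, i₂ x = Monoid.PushoutI.of
        (φ := twoFamHom (amalgMap na nb) (amalgMap nc nd)) false x) ∧
      (∀ x, i₁ (amalgMap na nb x) = i₂ (amalgMap nc nd x)) ∧
      (∀ (K : Type) [Group K] (f₁ : PresentedGroup (twoCyclicRels na nb) →* K)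
        (f₂ : PresentedGroup (twoCyclicRels nc nd) →* K),
        f₁.comp (amalgMap na nb) = f₂.comp (amalgMap nc nd) →
        ∃ F : Monoid.PushoutI (twoFamHom (amalgMap na nb) (amalgMap nc nd)) →* K,
          (∀ x, F (i₁ x) = f₁ x) ∧ (∀ x, F (i₂ x) = f₂ x)) ∧
      (∀ (K : Type) [Group K]
        (F G : Monoid.PushoutI (twoFamHom (amalgMap na nb) (amalgMap nc nd)) →* K),
        F.comp i₁ = G.comp i₁ → F.comp i₂ = G.comp i₂ → F = G) := by
  refine ⟨Monoid.PushoutI.of (φ := twoFamHom (amalgMap na nb) (amalgMap nc nd)) true,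
    Monoid.PushoutI.of (φ := twoFamHom (amalgMap na nb) (amalgMap nc nd)) false,
    fun _ => rfl, fun _ => rfl, ?_, ?_, ?_⟩
  · intro x
    exact (Monoid.PushoutI.of_apply_eq_base
      (twoFamHom (amalgMap na nb) (amalgMap nc nd)) true x).trans
      (Monoid.PushoutI.of_apply_eq_base
      (twoFamHom (amalgMap na nb) (amalgMap nc nd)) false x).symm
  · intro K _ f₁ f₂ h
    refine ⟨Monoid.PushoutI.lift (fun i => match i with
      | true => f₁
      | false => f₂) (f₁.comp (amalgMap na nb)) ?_, ?_, ?_⟩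
    · rintro (_ | _)
      · exact h.symm
      · rfl
    · intro x
      exact Monoid.PushoutI.lift_of (φ := twoFamHom (amalgMap na nb) (amalgMap nc nd)) _ _ _
        (i := true) x
    · intro x
      exact Monoid.PushoutI.lift_of (φ := twoFamHom (amalgMap na nb) (amalgMap nc nd)) _ _ _
        (i := false) x
  · intro K _ F G h1 h2
    refine Monoid.PushoutI.hom_ext_nonempty ?_
    rintro (_ | _)
    · exact h2
    · exact h1

/-- `R` is the amalgamated free product `G₁ *_C G₂` with
`G₁ = ⟨a, b | a^{n_a} = b^{n_b} = 1⟩`, `G₂ = ⟨c, d | c^{n_c} = d^{n_d} = 1⟩`,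
`C` free on `s, t`, amalgamated via `s ↦ a b⁻¹, t ↦ b⁻¹ a` and `s ↦ c d⁻¹, t ↦ d⁻¹ c`;
the isomorphism carries the images of `a, b, c, d` in the pushout to the
generators `a, b, c, d` of `R`. -/
theorem rect_amalgam_ab_cd (na nb nc nd : ℕ)
    (hna : 2 ≤ na) (hnb : 2 ≤ nb) (hnc : 2 ≤ nc) (hnd : 2 ≤ nd) :
    ∃ e : Monoid.PushoutI (twoFamHom (amalgMap na nb) (amalgMap nc nd)) ≃*
        RectGroup na nb nc nd,
      e (Monoid.PushoutI.of (φ := twoFamHom (amalgMap na nb) (amalgMap nc nd)) true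
          (PresentedGroup.of 0)) = Ra na nb nc nd ∧
      e (Monoid.PushoutI.of (φ := twoFamHom (amalgMap na nb) (amalgMap nc nd)) true
          (PresentedGroup.of 1)) = Rb na nb nc nd ∧
      e (Monoid.PushoutI.of (φ := twoFamHom (amalgMap na nb) (amalgMap nc nd)) false
          (PresentedGroup.of 0)) = Rc na nb nc nd ∧
      e (Monoid.PushoutI.of (φ := twoFamHom (amalgMap na nb) (amalgMap nc nd)) false
          (PresentedGroup.of 1)) = Rd na nb nc nd := by
  obtain ⟨i₁, i₂, e1, e2, hi, hl, hu⟩ := push_data na nb nc nd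
  obtain ⟨ra, rb, rc, rd, r1, r2⟩ := rect_rel na nb nc nd
  obtain ⟨f₁, f10, f11⟩ := twoCyc_lift na nb _ _ ra rb
  obtain ⟨f₂, f20, f21⟩ := twoCyc_lift nc nd _ _ rc rd
  rw [mul_inv_eq_one, grp_aux1] at r1
  rw [mul_inv_eq_one, grp_aux2] at r2
  obtain ⟨F, F1, F2⟩ := hl _ f₁ f₂ (by
    ext i
    fin_cases i
    · simpa [amalgMap, f10, f11, f20, f21] using r1
    · simpa [amalgMap, f10, f11, f20, f21] using r2)
  have hm₁ : ∀ x y, i₁ (x * y⁻¹) = i₁ x * (i₁ y)⁻¹ ∧ i₁ (y⁻¹ * x) = (i₁ y)⁻¹ * i₁ x := hom_aux i₁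
  have hm₂ : ∀ x y, i₂ (x * y⁻¹) = i₂ x * (i₂ y)⁻¹ ∧ i₂ (y⁻¹ * x) = (i₂ y)⁻¹ * i₂ x := hom_aux i₂
  have s := hi (FreeGroup.of 0)
  have t := hi (FreeGroup.of 1)
  simp only [amalgMap, FreeGroup.lift_apply_of, Matrix.cons_val_zero, Matrix.cons_val_one] at s t
  replace s := ((hm₁ _ _).1.symm.trans s).trans (hm₂ _ _).1
  replace t := ((hm₁ _ _).2.symm.trans t).trans (hm₂ _ _).2
  obtain ⟨B, Ba, Bb, Bc, Bd⟩ := rect_lift na nb nc nd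
    (i₁ (PresentedGroup.of 0)) (i₁ (PresentedGroup.of 1))
    (i₂ (PresentedGroup.of 0)) (i₂ (PresentedGroup.of 1))
    (by rw [← map_pow, (twoCyc_pow na nb).1, map_one])
    (by rw [← map_pow, (twoCyc_pow na nb).2, map_one])
    (by rw [← map_pow, (twoCyc_pow nc nd).1, map_one])
    (by rw [← map_pow, (twoCyc_pow nc nd).2, map_one])
    (grp_aux1.2 s) (grp_aux2.2 t)
  have hBF : B.comp F = MonoidHom.id _ := by
    apply hu
    · apply PresentedGroup.ext
      intro i
      fin_cases i
      · simp [F1, f10, Ba]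
      · simp [F1, f11, Bb]
    · apply PresentedGroup.ext
      intro i
      fin_cases i
      · simp [F2, f20, Bc]
      · simp [F2, f21, Bd]
  have hFB : F.comp B = MonoidHom.id _ := by
    apply PresentedGroup.ext
    intro i
    fin_cases i
    · change F (B (Ra na nb nc nd)) = Ra na nb nc nd
      rw [Ba, F1, f10]
    · change F (B (Rb na nb nc nd)) = Rb na nb nc nd
      rw [Bb, F1, f11]
    · change F (B (Rc na nb nc nd)) = Rc na nb nc nd
      rw [Bc, F2, f20]
    · change F (B (Rd na nb nc nd)) = Rd na nb nc nd
      rw [Bd, F2, f21]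
  refine ⟨MonoidHom.toMulEquiv F B hBF hFB, ?_, ?_, ?_, ?_⟩
  · exact (congrArg F (e1 _)).symm.trans ((F1 _).trans f10)
  · exact (congrArg F (e1 _)).symm.trans ((F1 _).trans f11)
  · exact (congrArg F (e2 _)).symm.trans ((F2 _).trans f20)
  · exact (congrArg F (e2 _)).symm.trans ((F2 _).trans f21)
end

section
/- Suppose n_a = n_b = n_c = n_d = 2. Then the element a b of the rectangle group R has infinite order; that is, the amalgamating subgroup C = ⟨a b⟩ is infinite cyclic. -/
/-- If `n_a = n_b = n_c = n_d = 2`, the element `a b` of the rectangle group has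
infinite order: the amalgamating subgroup `C = ⟨a b⟩` is infinite cyclic. -/
theorem rect_ab_infinite_order :
    ¬ IsOfFinOrder (Ra 2 2 2 2 * Rb 2 2 2 2) := by
  intro h
  let f : Fin 4 → DihedralGroup 0 :=
    ![DihedralGroup.sr 0, DihedralGroup.sr 1, DihedralGroup.sr 0, DihedralGroup.sr 1]
  have hf : ∀ r ∈ rectRels 2 2 2 2, FreeGroup.lift f r = 1 := by
    intro r hr
    simp only [rectRels, Set.mem_insert_iff, Set.mem_singleton_iff] at hr
    rcases hr with rfl | rfl | rfl | rfl | rfl | rfl <;>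
      simp [f, pow_two]
  have h2 := (PresentedGroup.toGroup hf).isOfFinOrder h
  have h3 : PresentedGroup.toGroup hf (Ra 2 2 2 2 * Rb 2 2 2 2)
      = (DihedralGroup.r 1 : DihedralGroup 0) := by
    rw [map_mul, Ra, Rb, PresentedGroup.toGroup.of, PresentedGroup.toGroup.of]
    simp [f]
  rw [h3, ← orderOf_pos_iff, DihedralGroup.orderOf_r_one] at h2
  exact lt_irrefl _ h2
end

section
/- Suppose n_a = n_b = n_c = n_d = 2. Then the group homomorphism from the rectangle group R to the group of isometric self-equivalences of the Euclidean plane ℝ² sending a, b, c, d respectively to the point reflections about A = (0,1), B = (1,1), C = (0,0), D = (1,0) is injective; that is, R acts faithfully on the plane by these rotations through π. -/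
/-- The point of the Euclidean plane with coordinates `(x, y)`. -/
noncomputable def pt (x y : ℝ) : EuclideanSpace ℝ (Fin 2) :=
  (WithLp.equiv 2 (Fin 2 → ℝ)).symm ![x, y]

/-- The point reflection (rotation through `π`) about `P`, `z ↦ 2P − z`, as an isometric
self-equivalence of the Euclidean plane. -/
noncomputable def ptRefl (P : EuclideanSpace ℝ (Fin 2)) :
    EuclideanSpace ℝ (Fin 2) ≃ᵢ EuclideanSpace ℝ (Fin 2) :=
  (AffineIsometryEquiv.pointReflection ℝ P).toIsometryEquiv

theorem rect_aux_normal {G : Type*} [Group G] (a b c d : G) (ha : a * a = 1) (hb : b * b = 1)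
    (hc : c * c = 1) (hd : d * d = 1) (h1 : b * a⁻¹ = d * c⁻¹) (h2 : c * a⁻¹ = d * b⁻¹)
    (hcl : Subgroup.closure {a, b, c, d} = ⊤) (g : G) :
    ∃ i j : ℤ, g = (b * a) ^ i * (c * a) ^ j ∨ g = (b * a) ^ i * (c * a) ^ j * a := by
  have ia : a⁻¹ = a := inv_eq_of_mul_eq_one_left ha
  have ib : b⁻¹ = b := inv_eq_of_mul_eq_one_left hb
  have ic : c⁻¹ = c := inv_eq_of_mul_eq_one_left hc
  have idd : d⁻¹ = d := inv_eq_of_mul_eq_one_left hd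
  rw [ia, ic] at h1
  rw [ia, ib] at h2
  have d1 : d = b * a * c := by rw [h1, mul_assoc, hc, mul_one]
  have d2 : d = c * a * b := by rw [h2, mul_assoc, hb, mul_one]
  have hxy : Commute (b * a) (c * a) := by
    show b * a * (c * a) = c * a * (b * a)
    rw [← mul_assoc, ← mul_assoc, ← d1, ← d2]
  have sx : SemiconjBy a (b * a) (b * a)⁻¹ := by
    show a * (b * a) = (b * a)⁻¹ * a
    rw [mul_inv_rev, ia, ib, mul_assoc]
  have sy : SemiconjBy a (c * a) (c * a)⁻¹ := by
    show a * (c * a) = (c * a)⁻¹ * a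
    rw [mul_inv_rev, ia, ic, mul_assoc]
  have hbx : b = b * a * a := by rw [mul_assoc, ha, mul_one]
  have hcx : c = c * a * a := by rw [mul_assoc, ha, mul_one]
  have hdx : d = (b * a) * ((c * a) * a) := by rw [← hcx, ← d1]
  generalize hX : b * a = x at *
  generalize hY : c * a = y at *
  let P : G → Prop := fun g => ∃ i j : ℤ, g = x ^ i * y ^ j ∨ g = x ^ i * y ^ j * a
  have Pa : ∀ g, P g → P (a * g) := by
    rintro g ⟨i, j, h⟩
    have key : a * (x ^ i * y ^ j) = x ^ (-i) * y ^ (-j) * a := by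
      have := ((sx.zpow_right i).mul_right (sy.zpow_right j)).eq
      simpa using this
    refine ⟨-i, -j, ?_⟩
    rcases h with rfl | rfl
    · exact Or.inr key
    · left
      rw [← mul_assoc, key, mul_assoc, ha, mul_one]
  have Px : ∀ g, P g → P (x * g) := by
    rintro g ⟨i, j, h⟩
    refine ⟨1 + i, j, ?_⟩
    rcases h with rfl | rfl
    · left; rw [zpow_add, zpow_one]; group
    · right; rw [zpow_add, zpow_one]; group
  have Py : ∀ g, P g → P (y * g) := by
    rintro g ⟨i, j, h⟩
    refine ⟨i, 1 + j, ?_⟩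
    have e : y * (x ^ i * y ^ j) = x ^ i * y ^ (1 + j) := by
      rw [← mul_assoc, (hxy.symm.zpow_right i).eq, mul_assoc, zpow_add, zpow_one]
    rcases h with rfl | rfl
    · left; exact e
    · right; rw [← mul_assoc, e]
  have Pgen : ∀ s ∈ ({a, b, c, d} : Set G), ∀ g, P g → P (s * g) := by
    intro s hs g hg
    simp only [Set.mem_insert_iff, Set.mem_singleton_iff] at hs
    rcases hs with h | h | h | h
    · rw [h]; exact Pa _ hg
    · rw [h, hbx, mul_assoc]; exact Px _ (Pa _ hg)
    · rw [h, hcx, mul_assoc]; exact Py _ (Pa _ hg)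
    · rw [h, hdx, mul_assoc, mul_assoc]; exact Px _ (Py _ (Pa _ hg))
  have hg : g ∈ Subgroup.closure {a, b, c, d} := by rw [hcl]; trivial
  show P g
  induction hg using Subgroup.closure_induction_left with
  | one => exact ⟨0, 0, by simp⟩
  | mul_left s hs g _ ih => exact Pgen s hs g ih
  | inv_mul_cancel s hs g _ ih =>
    have : s⁻¹ = s := by
      simp only [Set.mem_insert_iff, Set.mem_singleton_iff] at hs
      rcases hs with h | h | h | h <;> rw [h] <;> assumption
    rw [this]; exact Pgen s hs g ih

theorem rect_aux_trans {E : Type*} [NormedAddCommGroup E] (T : E ≃ᵢ E) (v : E)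
    (h : ∀ z, T z = v + z) (i : ℤ) (z : E) : (T ^ i) z = i • v + z := by
  have hinv : ∀ z, T⁻¹ z = -v + z := by
    intro z
    apply T.injective
    rw [IsometryEquiv.apply_inv_self, h]; abel
  induction i using Int.induction_on generalizing z with
  | zero => simp
  | succ n ih => rw [zpow_add_one, IsometryEquiv.mul_apply, ih, h, add_smul, one_smul]; abel
  | pred n ih => rw [zpow_sub_one, IsometryEquiv.mul_apply, ih, hinv, sub_smul, one_smul]; abel

theorem rect_aux_refl (P z : EuclideanSpace ℝ (Fin 2)) : ptRefl P z = P - z + P := by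
  simp [ptRefl, AffineIsometryEquiv.pointReflection_apply]

/-- For `n_a = n_b = n_c = n_d = 2`, the homomorphism from the rectangle group `R` to the
isometry group of the Euclidean plane sending `a, b, c, d` to the point reflections
about `A = (0,1)`, `B = (1,1)`, `C = (0,0)`, `D = (1,0)` is injective: `R` acts
faithfully on the plane by these rotations through `π`. -/
theorem rect_acts_faithfully_on_plane
    (φ : RectGroup 2 2 2 2 →* (EuclideanSpace ℝ (Fin 2) ≃ᵢ EuclideanSpace ℝ (Fin 2)))
    (ha : φ (Ra 2 2 2 2) = ptRefl (pt 0 1))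
    (hb : φ (Rb 2 2 2 2) = ptRefl (pt 1 1))
    (hc : φ (Rc 2 2 2 2) = ptRefl (pt 0 0))
    (hd : φ (Rd 2 2 2 2) = ptRefl (pt 1 0)) :
    Function.Injective φ := by
  have rel : ∀ r ∈ rectRels 2 2 2 2, PresentedGroup.mk (rectRels 2 2 2 2) r = 1 :=
    fun r hr => PresentedGroup.one_of_mem hr
  have ra : Ra 2 2 2 2 * Ra 2 2 2 2 = 1 := by
    have := rel (FreeGroup.of 0 ^ 2) (by simp [rectRels])
    rwa [map_pow, pow_two] at this
  have rb : Rb 2 2 2 2 * Rb 2 2 2 2 = 1 := by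
    have := rel (FreeGroup.of 1 ^ 2) (by simp [rectRels])
    rwa [map_pow, pow_two] at this
  have rc : Rc 2 2 2 2 * Rc 2 2 2 2 = 1 := by
    have := rel (FreeGroup.of 2 ^ 2) (by simp [rectRels])
    rwa [map_pow, pow_two] at this
  have rd : Rd 2 2 2 2 * Rd 2 2 2 2 = 1 := by
    have := rel (FreeGroup.of 3 ^ 2) (by simp [rectRels])
    rwa [map_pow, pow_two] at this
  have r1 : Rb 2 2 2 2 * (Ra 2 2 2 2)⁻¹ = Rd 2 2 2 2 * (Rc 2 2 2 2)⁻¹ := by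
    have := rel (FreeGroup.of 1 * (FreeGroup.of 0)⁻¹ * (FreeGroup.of 3 * (FreeGroup.of 2)⁻¹)⁻¹)
      (by simp [rectRels])
    rw [map_mul, map_inv, mul_inv_eq_one, map_mul, map_mul, map_inv, map_inv] at this
    exact this
  have r2 : Rc 2 2 2 2 * (Ra 2 2 2 2)⁻¹ = Rd 2 2 2 2 * (Rb 2 2 2 2)⁻¹ := by
    have := rel (FreeGroup.of 2 * (FreeGroup.of 0)⁻¹ * (FreeGroup.of 3 * (FreeGroup.of 1)⁻¹)⁻¹)
      (by simp [rectRels])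
    rw [map_mul, map_inv, mul_inv_eq_one, map_mul, map_mul, map_inv, map_inv] at this
    exact this
  have hcl : Subgroup.closure {Ra 2 2 2 2, Rb 2 2 2 2, Rc 2 2 2 2, Rd 2 2 2 2} = ⊤ := by
    rw [eq_top_iff, ← PresentedGroup.closure_range_of (rectRels 2 2 2 2)]
    apply Subgroup.closure_mono
    rintro _ ⟨i, rfl⟩
    fin_cases i
    · exact Or.inl rfl
    · exact Or.inr (Or.inl rfl)
    · exact Or.inr (Or.inr (Or.inl rfl))
    · exact Or.inr (Or.inr (Or.inr rfl))
  have tx : ∀ z, φ (Rb 2 2 2 2 * Ra 2 2 2 2) z = pt 2 0 + z := by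
    intro z
    rw [map_mul, hb, ha, IsometryEquiv.mul_apply, rect_aux_refl, rect_aux_refl]
    ext k; fin_cases k <;> simp [pt] <;> ring
  have ty : ∀ z, φ (Rc 2 2 2 2 * Ra 2 2 2 2) z = pt 0 (-2) + z := by
    intro z
    rw [map_mul, hc, ha, IsometryEquiv.mul_apply, rect_aux_refl, rect_aux_refl]
    ext k; fin_cases k <;> simp [pt] <;> ring
  rw [injective_iff_map_eq_one]
  intro g hg
  obtain ⟨i, j, h | h⟩ := rect_aux_normal _ _ _ _ ra rb rc rd r1 r2 hcl g
  · have e : φ g (pt 0 0) = pt 0 0 := by rw [hg]; rfl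
    rw [h, map_mul, map_zpow, map_zpow, IsometryEquiv.mul_apply, rect_aux_trans _ _ tx,
      rect_aux_trans _ _ ty] at e
    have e0 := congrArg (fun w : EuclideanSpace ℝ (Fin 2) => w 0) e
    have e1 := congrArg (fun w : EuclideanSpace ℝ (Fin 2) => w 1) e
    simp [pt] at e0 e1
    rw [h, e0, e1]; simp
  · exfalso
    have e : φ g (pt 0 0) = pt 0 0 := by rw [hg]; rfl
    have e' : φ g (pt 1 0) = pt 1 0 := by rw [hg]; rfl
    rw [h, map_mul, map_mul, map_zpow, map_zpow, IsometryEquiv.mul_apply, IsometryEquiv.mul_apply,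
      rect_aux_trans _ _ tx, rect_aux_trans _ _ ty, ha, rect_aux_refl] at e e'
    have e0 := congrArg (fun w : EuclideanSpace ℝ (Fin 2) => w 0) e
    have e1 := congrArg (fun w : EuclideanSpace ℝ (Fin 2) => w 0) e'
    simp [pt] at e0 e1
    rw [e0] at e1
    norm_num at e1
end

section
/- Let O be the presented group on generators x₁, x₂, x₃, x₄ with relations x₁^{n_a} = x₂^{n_b} = x₃^{n_d} = x₄^{n_c} = 1 and x₁ x₂ x₃ x₄ = 1 (the fundamental group of the 2-sphere orbifold with four cone points of orders n_a, n_b, n_d, n_c). Then the assignment x₁ ↦ a, x₂ ↦ b⁻¹, x₃ ↦ d, x₄ ↦ c⁻¹ extends to a surjective group homomorphism from O onto the rectangle group R. -/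
/-- The relations of the fundamental group of the 2-sphere orbifold with four cone
points of orders `n_a, n_b, n_d, n_c`: generators `x₁, x₂, x₃, x₄` with
`x₁^{n_a} = x₂^{n_b} = x₃^{n_d} = x₄^{n_c} = 1` and `x₁ x₂ x₃ x₄ = 1`. -/
def orbifoldRels (na nb nc nd : ℕ) : Set (FreeGroup (Fin 4)) :=
  {FreeGroup.of 0 ^ na, FreeGroup.of 1 ^ nb, FreeGroup.of 2 ^ nd, FreeGroup.of 3 ^ nc,
    FreeGroup.of 0 * FreeGroup.of 1 * FreeGroup.of 2 * FreeGroup.of 3}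

/-- The assignment `x₁ ↦ a`, `x₂ ↦ b⁻¹`, `x₃ ↦ d`, `x₄ ↦ c⁻¹` extends to a surjective
homomorphism from the orbifold group `O` onto the rectangle group `R`. -/
theorem orbifold_surjects_onto_rect (na nb nc nd : ℕ)
    (hna : 2 ≤ na) (hnb : 2 ≤ nb) (hnc : 2 ≤ nc) (hnd : 2 ≤ nd) :
    ∃ φ : PresentedGroup (orbifoldRels na nb nc nd) →* RectGroup na nb nc nd,
      φ (PresentedGroup.of 0) = Ra na nb nc nd ∧
      φ (PresentedGroup.of 1) = (Rb na nb nc nd)⁻¹ ∧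
      φ (PresentedGroup.of 2) = Rd na nb nc nd ∧
      φ (PresentedGroup.of 3) = (Rc na nb nc nd)⁻¹ ∧
      Function.Surjective φ := by
  have rel : ∀ r ∈ rectRels na nb nc nd,
      (PresentedGroup.mk (rectRels na nb nc nd)) r = 1 := fun r hr =>
    PresentedGroup.one_of_mem hr
  have ha : Ra na nb nc nd ^ na = 1 := by
    have := rel (FreeGroup.of 0 ^ na) (by simp [rectRels])
    rw [map_pow] at this; exact this
  have hb : Rb na nb nc nd ^ nb = 1 := by
    have := rel (FreeGroup.of 1 ^ nb) (by simp [rectRels])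
    rw [map_pow] at this; exact this
  have hc : Rc na nb nc nd ^ nc = 1 := by
    have := rel (FreeGroup.of 2 ^ nc) (by simp [rectRels])
    rw [map_pow] at this; exact this
  have hd : Rd na nb nc nd ^ nd = 1 := by
    have := rel (FreeGroup.of 3 ^ nd) (by simp [rectRels])
    rw [map_pow] at this; exact this
  have h1 : Rb na nb nc nd * (Ra na nb nc nd)⁻¹ =
      Rd na nb nc nd * (Rc na nb nc nd)⁻¹ := by
    have := rel (FreeGroup.of 1 * (FreeGroup.of 0)⁻¹ *
      (FreeGroup.of 3 * (FreeGroup.of 2)⁻¹)⁻¹) (by simp [rectRels])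
    rw [map_mul, map_mul, map_inv, map_inv, map_mul, map_inv, mul_inv_eq_one] at this
    exact this
  let f : Fin 4 → RectGroup na nb nc nd :=
    ![Ra na nb nc nd, (Rb na nb nc nd)⁻¹, Rd na nb nc nd, (Rc na nb nc nd)⁻¹]
  have hf : ∀ r ∈ orbifoldRels na nb nc nd, FreeGroup.lift f r = 1 := by
    intro r hr
    simp only [orbifoldRels, Set.mem_insert_iff, Set.mem_singleton_iff] at hr
    rcases hr with rfl | rfl | rfl | rfl | rfl
    · simpa [f] using ha
    · simpa [f] using hb
    · simpa [f] using hd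
    · simpa [f] using hc
    · have : Ra na nb nc nd * (Rb na nb nc nd)⁻¹ * Rd na nb nc nd * (Rc na nb nc nd)⁻¹ = 1 := by
        rw [mul_assoc, ← h1]; group
      simpa [f] using this
  have e : ∀ i, PresentedGroup.toGroup hf (PresentedGroup.of i) = f i := fun i =>
    PresentedGroup.toGroup.of hf
  refine ⟨PresentedGroup.toGroup hf, e 0, e 1, e 2, e 3, ?_⟩
  rw [← MonoidHom.range_eq_top, eq_top_iff,
    ← PresentedGroup.closure_range_of (rectRels na nb nc nd), Subgroup.closure_le]
  rintro _ ⟨i, rfl⟩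
  have m : ∀ i, f i ∈ (PresentedGroup.toGroup hf).range := fun i => ⟨_, e i⟩
  fin_cases i
  · exact m 0
  · exact inv_mem_iff.mp (m 1)
  · exact inv_mem_iff.mp (m 3)
  · exact m 2
end

section
/- In the cube group S, the elements x = a b⁻¹, y = a c⁻¹ and z = a e⁻¹ pairwise commute. -/
/-- The word `u v⁻¹` in the free group on eight generators. -/
def cw (i j : Fin 8) : FreeGroup (Fin 8) := FreeGroup.of i * (FreeGroup.of j)⁻¹

/-- The defining relations of the cube group `S` on generators
`a, b, c, d, e, f, g, h` (indexed `0, …, 7`):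
`a b⁻¹ = c d⁻¹ = e f⁻¹ = g h⁻¹`, `a c⁻¹ = b d⁻¹ = e g⁻¹ = f h⁻¹`,
`a e⁻¹ = b f⁻¹ = c g⁻¹ = d h⁻¹`. -/
def cubeRels : Set (FreeGroup (Fin 8)) :=
  {cw 0 1 * (cw 2 3)⁻¹, cw 2 3 * (cw 4 5)⁻¹, cw 4 5 * (cw 6 7)⁻¹,
    cw 0 2 * (cw 1 3)⁻¹, cw 1 3 * (cw 4 6)⁻¹, cw 4 6 * (cw 5 7)⁻¹,
    cw 0 4 * (cw 1 5)⁻¹, cw 1 5 * (cw 2 6)⁻¹, cw 2 6 * (cw 3 7)⁻¹}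

/-- The cube group `S`. -/
abbrev CubeGroup : Type := PresentedGroup cubeRels

/-- The generator `a` of the cube group. -/
def Sa : CubeGroup := PresentedGroup.of 0
/-- The generator `b` of the cube group. -/
def Sb : CubeGroup := PresentedGroup.of 1
/-- The generator `c` of the cube group. -/
def Sc : CubeGroup := PresentedGroup.of 2
/-- The generator `e` of the cube group. -/
def Se : CubeGroup := PresentedGroup.of 4

theorem cube_comm_aux {G : Type*} [Group G] (a b c d : G)
    (h1 : a * b⁻¹ = c * d⁻¹) (h2 : a * c⁻¹ = b * d⁻¹) : Commute (a * b⁻¹) (a * c⁻¹) := by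
  have e1 : (a * b⁻¹) * (a * c⁻¹) = a * d⁻¹ := by rw [h2]; group
  have e2 : (a * c⁻¹) * (a * b⁻¹) = a * d⁻¹ := by rw [h1]; group
  exact e1.trans e2.symm

theorem cube_rel_aux (i j k l : Fin 8) (h : cw i j * (cw k l)⁻¹ ∈ cubeRels) :
    (PresentedGroup.of i * (PresentedGroup.of j)⁻¹ : CubeGroup) =
      PresentedGroup.of k * (PresentedGroup.of l)⁻¹ := by
  have := PresentedGroup.one_of_mem h
  rw [map_mul, map_inv] at this
  have := mul_inv_eq_one.mp this
  exact this

/-- In the cube group `S`, the elements `x = a b⁻¹`, `y = a c⁻¹`, `z = a e⁻¹`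
pairwise commute. -/
theorem cube_xyz_pairwise_commute :
    Commute (Sa * Sb⁻¹) (Sa * Sc⁻¹) ∧
    Commute (Sa * Sb⁻¹) (Sa * Se⁻¹) ∧
    Commute (Sa * Sc⁻¹) (Sa * Se⁻¹) := by
  have r1 := cube_rel_aux 0 1 2 3 (by simp [cubeRels])
  have r2 := cube_rel_aux 2 3 4 5 (by simp [cubeRels])
  have r4 := cube_rel_aux 0 2 1 3 (by simp [cubeRels])
  have r5 := cube_rel_aux 1 3 4 6 (by simp [cubeRels])
  have r7 := cube_rel_aux 0 4 1 5 (by simp [cubeRels])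
  have r8 := cube_rel_aux 1 5 2 6 (by simp [cubeRels])
  exact ⟨cube_comm_aux _ _ _ _ r1 r4, cube_comm_aux _ _ _ _ (r1.trans r2) r7,
    cube_comm_aux _ _ _ _ (r4.trans r5) (r7.trans r8)⟩
end

section
/- In the cube group S, the elements x' = b⁻¹ a, y' = c⁻¹ a and z' = e⁻¹ a pairwise commute. -/
theorem commute_of_square {G : Type*} [Group G] {a b c d : G}
    (h1 : a * b⁻¹ = c * d⁻¹) (h2 : a * c⁻¹ = b * d⁻¹) : Commute (b⁻¹ * a) (c⁻¹ * a) := by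
  have e1 : b⁻¹ * a * (c⁻¹ * a) = b⁻¹ * (a * c⁻¹) * a := by group
  have e2 : c⁻¹ * a * (b⁻¹ * a) = c⁻¹ * (a * b⁻¹) * a := by group
  unfold Commute SemiconjBy
  rw [e1, e2, h1, h2]
  group

theorem cube_rel {i j k l : Fin 8} (h : cw i j * (cw k l)⁻¹ ∈ cubeRels) :
    (PresentedGroup.of i : CubeGroup) * (PresentedGroup.of j)⁻¹ =
      PresentedGroup.of k * (PresentedGroup.of l)⁻¹ := by
  have := PresentedGroup.one_of_mem h
  rw [map_mul, map_inv, mul_inv_eq_one] at this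
  simp only [cw, map_mul, map_inv] at this
  exact this

/-- In the cube group `S`, the elements `x' = b⁻¹ a`, `y' = c⁻¹ a`, `z' = e⁻¹ a`
pairwise commute. -/
theorem cube_xyz'_pairwise_commute :
    Commute (Sb⁻¹ * Sa) (Sc⁻¹ * Sa) ∧
    Commute (Sb⁻¹ * Sa) (Se⁻¹ * Sa) ∧
    Commute (Sc⁻¹ * Sa) (Se⁻¹ * Sa) := by
  have a1 := cube_rel (i := 0) (j := 1) (k := 2) (l := 3) (by simp [cubeRels])
  have a2 := cube_rel (i := 2) (j := 3) (k := 4) (l := 5) (by simp [cubeRels])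
  have b1 := cube_rel (i := 0) (j := 2) (k := 1) (l := 3) (by simp [cubeRels])
  have b2 := cube_rel (i := 1) (j := 3) (k := 4) (l := 6) (by simp [cubeRels])
  have c1 := cube_rel (i := 0) (j := 4) (k := 1) (l := 5) (by simp [cubeRels])
  have c2 := cube_rel (i := 1) (j := 5) (k := 2) (l := 6) (by simp [cubeRels])
  exact ⟨commute_of_square a1 b1, commute_of_square (a1.trans a2) c1,
    commute_of_square (b1.trans b2) (c1.trans c2)⟩
end

section
/- The group homomorphism from ℤ × ℤ × ℤ to the cube group S defined by (l, m, n) ↦ (a b⁻¹)^l (a c⁻¹)^m (a e⁻¹)^n is injective; that is, x = a b⁻¹, y = a c⁻¹ and z = a e⁻¹ generate a free abelian subgroup of S of rank 3. -/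
/-- The image of the generators in `ℤ³`. -/
def cubeVal : Fin 8 → Multiplicative (ℤ × ℤ × ℤ) := fun i =>
  Multiplicative.ofAdd (-((i.val % 2 : ℕ) : ℤ), -((i.val / 2 % 2 : ℕ) : ℤ), -((i.val / 4 : ℕ) : ℤ))

theorem cubeVal_rels : ∀ r ∈ cubeRels, FreeGroup.lift cubeVal r = 1 := by
  intro r hr
  simp only [cubeRels, Set.mem_insert_iff, Set.mem_singleton_iff] at hr
  rcases hr with h | h | h | h | h | h | h | h | h <;> subst h <;>
    simp only [cw, map_mul, map_inv, FreeGroup.lift_apply_of] <;> decide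

theorem cube_free_abelian_rank_three :
    Function.Injective (fun t : ℤ × ℤ × ℤ =>
      (Sa * Sb⁻¹) ^ t.1 * (Sa * Sc⁻¹) ^ t.2.1 * (Sa * Se⁻¹) ^ t.2.2) := by
  have key : ∀ t : ℤ × ℤ × ℤ, PresentedGroup.toGroup cubeVal_rels
      ((Sa * Sb⁻¹) ^ t.1 * (Sa * Sc⁻¹) ^ t.2.1 * (Sa * Se⁻¹) ^ t.2.2)
      = Multiplicative.ofAdd t := by
    intro t
    have h1 : cubeVal 0 * (cubeVal 1)⁻¹ = Multiplicative.ofAdd ((1, 0, 0) : ℤ × ℤ × ℤ) := by decide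
    have h2 : cubeVal 0 * (cubeVal 2)⁻¹ = Multiplicative.ofAdd ((0, 1, 0) : ℤ × ℤ × ℤ) := by decide
    have h3 : cubeVal 0 * (cubeVal 4)⁻¹ = Multiplicative.ofAdd ((0, 0, 1) : ℤ × ℤ × ℤ) := by decide
    simp only [Sa, Sb, Sc, Se, map_mul, map_zpow, map_inv, PresentedGroup.toGroup.of, h1, h2, h3]
    rw [← ofAdd_zsmul, ← ofAdd_zsmul, ← ofAdd_zsmul, ← ofAdd_add, ← ofAdd_add]
    congr 1
    ext <;> simp
  intro s t h
  have := congrArg (PresentedGroup.toGroup cubeVal_rels) h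
  simp only [key] at this
  exact Multiplicative.ofAdd.injective this
end

section
/- The group homomorphism from the free product (ℤ × ℤ) ∗ (ℤ × ℤ) to the cube group S, determined by sending the two standard generators of the first free factor to a b⁻¹ and a c⁻¹ and the two standard generators of the second free factor to b⁻¹ a and c⁻¹ a, is injective; that is, the subgroup D = ⟨a b⁻¹, b⁻¹ a, a c⁻¹, c⁻¹ a⟩ of S is the free product of two free abelian groups of rank 2. -/
theorem exists_hom_of_commute {G : Type*} [Group G] (x y : G) (h : Commute x y) :
    ∃ f : Multiplicative (ℤ × ℤ) →* G,
      f (Multiplicative.ofAdd ((1, 0) : ℤ × ℤ)) = x ∧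
      f (Multiplicative.ofAdd ((0, 1) : ℤ × ℤ)) = y := by
  refine ⟨MonoidHom.mk' (fun v => x ^ (v.toAdd.1) * y ^ (v.toAdd.2)) ?_, ?_, ?_⟩
  · intro v w
    simp only [toAdd_mul, Prod.fst_add, Prod.snd_add, zpow_add]
    have := (h.zpow_zpow w.toAdd.1 v.toAdd.2).eq
    simp only [mul_assoc]
    congr 1
    simp only [← mul_assoc]
    congr 1
  · simp
  · simp

theorem hom_ext_Z2 {G : Type*} [Group G] (f g : Multiplicative (ℤ × ℤ) →* G)
    (h1 : f (Multiplicative.ofAdd ((1, 0) : ℤ × ℤ)) = g (Multiplicative.ofAdd ((1, 0) : ℤ × ℤ)))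
    (h2 : f (Multiplicative.ofAdd ((0, 1) : ℤ × ℤ)) = g (Multiplicative.ofAdd ((0, 1) : ℤ × ℤ))) :
    f = g := by
  refine MonoidHom.ext fun v => ?_
  have hv : v = (Multiplicative.ofAdd ((1, 0) : ℤ × ℤ)) ^ (v.toAdd.1) *
      (Multiplicative.ofAdd ((0, 1) : ℤ × ℤ)) ^ (v.toAdd.2) := by
    apply Multiplicative.toAdd.injective
    simp
  rw [hv]
  simp only [map_mul, map_zpow, h1, h2]

theorem cube_rel_s16 {r : FreeGroup (Fin 8)} (h : r ∈ cubeRels) :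
    PresentedGroup.mk cubeRels r = 1 :=
  PresentedGroup.one_of_mem h

theorem cube_commute : Commute (Sa * Sb⁻¹) (Sa * Sc⁻¹) := by
  have h1 := cube_rel_s16 (r := cw 0 1 * (cw 2 3)⁻¹) (by simp [cubeRels])
  have h2 := cube_rel_s16 (r := cw 0 2 * (cw 1 3)⁻¹) (by simp [cubeRels])
  simp only [cw, map_mul, map_inv] at h1 h2
  change Sa * Sb⁻¹ * (Sc * (PresentedGroup.of 3 : CubeGroup)⁻¹)⁻¹ = 1 at h1
  change Sa * Sc⁻¹ * (Sb * (PresentedGroup.of 3 : CubeGroup)⁻¹)⁻¹ = 1 at h2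
  generalize (PresentedGroup.of 3 : CubeGroup) = d at h1 h2
  rw [mul_inv_eq_one] at h1 h2
  have e : Sa * Sb⁻¹ * (Sa * Sc⁻¹) = Sa * d⁻¹ := by rw [h2]; group
  have e' : Sa * Sc⁻¹ * (Sa * Sb⁻¹) = Sa * d⁻¹ := by rw [h1]; group
  exact e.trans e'.symm

abbrev PP : Type := Monoid.Coprod (Multiplicative (ℤ × ℤ)) (Multiplicative (ℤ × ℤ))

def sw : MulAut PP := MulEquiv.coprodComm _ _

abbrev WW : Type := PP ⋊[MonoidHom.id (MulAut PP)] MulAut PP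

def wa : WW := SemidirectProduct.inr sw
def wx : WW := SemidirectProduct.inl (Monoid.Coprod.inl (Multiplicative.ofAdd ((1, 0) : ℤ × ℤ)))
def wy : WW := SemidirectProduct.inl (Monoid.Coprod.inl (Multiplicative.ofAdd ((0, 1) : ℤ × ℤ)))

theorem wxy : Commute wx wy := by
  unfold wx wy
  exact ((Commute.all (Multiplicative.ofAdd ((1, 0) : ℤ × ℤ))
    (Multiplicative.ofAdd ((0, 1) : ℤ × ℤ))).map Monoid.Coprod.inl).map SemidirectProduct.inl

theorem w_conj (p : PP) : wa⁻¹ * SemidirectProduct.inl p * wa = SemidirectProduct.inl (sw⁻¹ p) := by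
  have := SemidirectProduct.inl_aut_inv (φ := MonoidHom.id (MulAut PP)) sw p
  simpa [wa] using this.symm

def wgen : Fin 8 → WW :=
  ![wa, wx⁻¹ * wa, wy⁻¹ * wa, wx⁻¹ * wy⁻¹ * wa, wa, wx⁻¹ * wa, wy⁻¹ * wa, wx⁻¹ * wy⁻¹ * wa]

theorem wrel : ∀ r ∈ cubeRels, FreeGroup.lift wgen r = 1 := by

  intro r hr
  simp only [cubeRels, Set.mem_insert_iff, Set.mem_singleton_iff] at hr
  have c2 : wx⁻¹ * wy = wy * wx⁻¹ := wxy.inv_left.eq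
  have c3 : wy * wx⁻¹ * wy⁻¹ = wx⁻¹ := by rw [← c2]; group
  rcases hr with h | h | h | h | h | h | h | h | h <;> subst h <;>
    simp only [cw, map_mul, map_inv, FreeGroup.lift_apply_of] <;>
    simp [wgen, mul_assoc] <;> simp [← mul_assoc, c2, c3]

/-- The homomorphism from the free product `(ℤ × ℤ) ∗ (ℤ × ℤ)` to the cube group `S`
sending the standard generators of the first factor to `a b⁻¹` and `a c⁻¹` and those
of the second factor to `b⁻¹ a` and `c⁻¹ a` is injective: the subgroup
`D = ⟨a b⁻¹, b⁻¹ a, a c⁻¹, c⁻¹ a⟩` of `S` is the free product of two free abelian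
groups of rank 2. -/
theorem cube_D_free_product_of_free_abelians :
    ∃ φ : Monoid.Coprod (Multiplicative (ℤ × ℤ)) (Multiplicative (ℤ × ℤ)) →* CubeGroup,
      φ (Monoid.Coprod.inl (Multiplicative.ofAdd ((1, 0) : ℤ × ℤ))) = Sa * Sb⁻¹ ∧
      φ (Monoid.Coprod.inl (Multiplicative.ofAdd ((0, 1) : ℤ × ℤ))) = Sa * Sc⁻¹ ∧
      φ (Monoid.Coprod.inr (Multiplicative.ofAdd ((1, 0) : ℤ × ℤ))) = Sb⁻¹ * Sa ∧
      φ (Monoid.Coprod.inr (Multiplicative.ofAdd ((0, 1) : ℤ × ℤ))) = Sc⁻¹ * Sa ∧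
      Function.Injective φ := by
  obtain ⟨f, f1, f2⟩ := exists_hom_of_commute _ _ cube_commute
  obtain ⟨g, g1, g2⟩ := exists_hom_of_commute (Sb⁻¹ * Sa) (Sc⁻¹ * Sa) (by
    have h := cube_commute.map (MulAut.conj Sa⁻¹)
    simpa [mul_assoc] using h)
  refine ⟨Monoid.Coprod.lift f g, by simpa using f1, by simpa using f2, by simpa using g1,
    by simpa using g2, ?_⟩
  let Ψ : CubeGroup →* WW := PresentedGroup.toGroup wrel
  have ha : Ψ Sa = wa := by simp [Ψ, Sa, wgen]
  have hb : Ψ Sb = wx⁻¹ * wa := by simp [Ψ, Sb, wgen]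
  have hc : Ψ Sc = wy⁻¹ * wa := by simp [Ψ, Sc, wgen]
  have key : Ψ.comp (Monoid.Coprod.lift f g) = SemidirectProduct.inl := by
    apply Monoid.Coprod.hom_ext
    · apply hom_ext_Z2
      · simp [f1, ha, hb, wx]
      · simp [f2, ha, hc, wy]
    · apply hom_ext_Z2
      · have := w_conj (Monoid.Coprod.inl (Multiplicative.ofAdd ((1, 0) : ℤ × ℤ)))
        simp only [MonoidHom.comp_apply, Monoid.Coprod.lift_apply_inr, g1, map_mul, map_inv, ha, hb,
          mul_inv_rev, inv_inv]
        exact this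
      · have := w_conj (Monoid.Coprod.inl (Multiplicative.ofAdd ((0, 1) : ℤ × ℤ)))
        simp only [MonoidHom.comp_apply, Monoid.Coprod.lift_apply_inr, g2, map_mul, map_inv, ha, hc,
          mul_inv_rev, inv_inv]
        exact this
  have inj : Function.Injective (Ψ.comp (Monoid.Coprod.lift f g)) := by
    rw [key]; exact SemidirectProduct.inl_injective
  rw [MonoidHom.coe_comp] at inj
  exact inj.of_comp
end

section
/- In the parallelepiped group P_n, the elements x_i = a_0 (a_{e_i})⁻¹, for i = 1, …, n, pairwise commute. -/
/-- The defining relations of the parallelepiped group `P_n`: generators `a_v` indexed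
by the vertices `v ∈ {0,1}^n` of the `n`-cube, with, for every direction `i` and every
vertex `v` with `v_i = 0`, the relation `a_v (a_{v + e_i})⁻¹ = a_0 (a_{e_i})⁻¹`. -/
def parRels (n : ℕ) : Set (FreeGroup (Fin n → Bool)) :=
  { r | ∃ (i : Fin n) (v : Fin n → Bool), v i = false ∧
      r = FreeGroup.of v * (FreeGroup.of (Function.update v i true))⁻¹ *
        (FreeGroup.of (fun _ => false) *
          (FreeGroup.of (fun j => decide (j = i)))⁻¹)⁻¹ }

/-- The parallelepiped group `P_n`. -/
abbrev ParGroup (n : ℕ) : Type := PresentedGroup (parRels n)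

/-- The element `x_i = a_0 (a_{e_i})⁻¹` of the parallelepiped group `P_n`. -/
def Px (n : ℕ) (i : Fin n) : ParGroup n :=
  PresentedGroup.of (fun _ => false) *
    (PresentedGroup.of (fun j => decide (j = i)))⁻¹

theorem par_rel_aux (n : ℕ) (i : Fin n) (v : Fin n → Bool) (hv : v i = false) :
    (PresentedGroup.of v : ParGroup n) *
      (PresentedGroup.of (Function.update v i true))⁻¹ = Px n i := by
  have h := PresentedGroup.one_of_mem (rels := parRels n) ⟨i, v, hv, rfl⟩
  rw [map_mul, map_inv, mul_inv_eq_one, map_mul, map_mul, map_inv, map_inv] at h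
  exact h

theorem par_prod_aux (n : ℕ) (i j : Fin n) (hij : i ≠ j) :
    Px n i * Px n j = (PresentedGroup.of (fun _ => false) : ParGroup n) *
      (PresentedGroup.of (fun k => decide (k = i) || decide (k = j)))⁻¹ := by
  have h := par_rel_aux n j (fun k => decide (k = i)) (by simp [hij.symm])
  have e : Function.update (fun k => decide (k = i)) j true =
      (fun k => decide (k = i) || decide (k = j)) := by
    funext k
    by_cases hk : k = j
    · subst hk; simp
    · simp [hk]
  rw [e] at h
  rw [← h, Px]
  group

/-- In the parallelepiped group `P_n`, the elements `x_i = a_0 (a_{e_i})⁻¹`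
pairwise commute. -/
theorem par_x_pairwise_commute (n : ℕ) (hn : 1 ≤ n) (i j : Fin n) :
    Commute (Px n i) (Px n j) := by
  by_cases hij : i = j
  · subst hij; exact Commute.refl _
  · have e : (fun k : Fin n => decide (k = i) || decide (k = j)) =
        (fun k => decide (k = j) || decide (k = i)) := by
      funext k; exact Bool.or_comm _ _
    unfold Commute SemiconjBy
    rw [par_prod_aux n i j hij, par_prod_aux n j i (Ne.symm hij), e]
end
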